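/- Let P(z) = a_0 + a_1 z + a_2 z^2 be a complex polynomial of degree 2 all of whose zeros lie in |z| ≤ k with k ≥ 1, let m = min_{|z|=k}|P(z)|, and let 0 ≤ l < 1. Then max_{|z|=1}|P′(z)| ≥ (2/(1+k^2))·(max_{|z|=1}|P(z)| + l·m) + (1 − 1/k)|a_1| + (1/(k^2(1+k^2)))·{ ((k^2|a_2| − l·m − |a_0|)/(k^2|a_2| − l·m + |a_0|))·(k^2·max_{|z|=1}|P(z)| − l·m) + k|a_1|·((k−1)^2/2)·(2 + (k^2|a_2| − l·m − |a_0|)/(k^2|a_2| − l·m + |a_0|)) }. -/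

import Mathlib

open Polynomial Metric

/-- The maximum of `|P(z)|` over the circle `|z| = r`. -/
noncomputable def maxMod (P : Polynomial ℂ) (r : ℝ) : ℝ :=
  ⨆ z : sphere (0 : ℂ) r, ‖P.eval (z : ℂ)‖

/-- The minimum of `|P(z)|` over the circle `|z| = r`. -/
noncomputable def minMod (P : Polynomial ℂ) (r : ℝ) : ℝ :=
  ⨅ z : sphere (0 : ℂ) r, ‖P.eval (z : ℂ)‖

/-!
For a quadratic, `max |P'|` over the unit circle equals `2 |a₂| + |a₁|` and `max |P|` is at most
`|a₀| + |a₁| + |a₂|`, so the theorem reduces to the two coefficient inequalities `|a₀| ≤ K` and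
`k |a₁| ≤ K + |a₀|`, where `K = k² |a₂| - s` and `s ≤ m`. With `s = 0` they follow from Vieta's
formulas. In general, the minimum modulus principle for `zⁿ P(1/z)` on `|z| ≤ 1/k` shows that
the zeros stay in `|z| ≤ k` when the modulus of the leading coefficient is lowered by `s / kⁿ`.
-/

section MinimumModulus

variable {E : Type*} [NormedAddCommGroup E] [NormedSpace ℂ E] {f : E → ℂ} {U : Set E} {C : ℝ}

theorem le_norm_of_forall_mem_frontier_le_norm [Nontrivial E] (hU : Bornology.IsBounded U)
    (hf : DiffContOnCl ℂ f U) (hne : ∀ z ∈ U, f z ≠ 0) (hC : ∀ z ∈ frontier U, C ≤ ‖f z‖)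
    {z : E} (hz : z ∈ closure U) : C ≤ ‖f z‖ := by
  rcases le_or_gt C 0 with hC0 | hC0
  · exact hC0.trans (norm_nonneg _)
  have hne' : ∀ w ∈ closure U, f w ≠ 0 := by
    intro w hw
    rw [closure_eq_self_union_frontier] at hw
    rcases hw with hw | hw
    · exact hne w hw
    · exact norm_pos_iff.1 (hC0.trans_le (hC w hw))
  have hinv : ‖(f⁻¹) z‖ ≤ C⁻¹ :=
    Complex.norm_le_of_forall_mem_frontier_norm_le hU (hf.inv hne')
      (fun w hw => by simpa only [Pi.inv_apply, norm_inv] using inv_anti₀ hC0 (hC w hw)) hz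
  rw [Pi.inv_apply, norm_inv] at hinv
  exact (inv_le_inv₀ (norm_pos_iff.2 (hne' z hz)) hC0).1 hinv

theorem lt_norm_of_forall_mem_frontier_le_norm [Nontrivial E] (hU : Bornology.IsBounded U)
    (hUo : IsOpen U) (hUc : IsPreconnected U) (hf : DiffContOnCl ℂ f U)
    (hne : ∀ z ∈ U, f z ≠ 0) (hC : ∀ z ∈ frontier U, C ≤ ‖f z‖) {w : E} (hw : w ∈ U)
    (hCw : C < ‖f w‖) {z : E} (hz : z ∈ U) : C < ‖f z‖ := by
  have hle : ∀ v ∈ U, C ≤ ‖f v‖ := fun v hv =>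
    le_norm_of_forall_mem_frontier_le_norm hU hf hne hC (subset_closure hv)
  by_contra! hzC
  have hmax : IsMaxOn (norm ∘ f⁻¹) U z := fun v hv => by
    simpa using inv_anti₀ (norm_pos_iff.2 (hne z hz)) (hzC.trans (hle v hv))
  have hconst : ‖f⁻¹ w‖ = ‖f⁻¹ z‖ :=
    Complex.norm_eqOn_of_isPreconnected_of_isMaxOn hUc hUo (hf.differentiableOn.inv hne) hz hmax hw
  simp only [Pi.inv_apply, norm_inv, inv_inj] at hconst
  exact (hCw.trans_eq hconst).not_ge hzC

end MinimumModulus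

-- Homogenized Weierstrass product inequality: for `k = 1` and `x = 1 - y` it says
-- `1 - ∑ y ≤ ∏ (1 - y)`.
theorem pow_card_mul_sum_le {R : Type*} [CommRing R] [LinearOrder R] [IsStrictOrderedRing R]
    {k : R} (hk : 0 ≤ k) (s : Multiset R) (hs : ∀ x ∈ s, 0 ≤ x ∧ x ≤ k) :
    k ^ s.card * s.sum ≤ k * ((s.card - 1) * k ^ s.card + s.prod) := by
  induction s using Multiset.induction with
  | empty => simp
  | cons a s ih =>
    have hs' : ∀ x ∈ s, 0 ≤ x ∧ x ≤ k := fun x hx => hs x (Multiset.mem_cons_of_mem hx)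
    have ha : a ≤ k := (hs a (Multiset.mem_cons_self a s)).2
    have hprod : s.prod ≤ k ^ s.card := by
      simpa using Multiset.prod_map_le_prod_map₀ id (fun _ => k) (fun x hx => (hs' x hx).1)
        (fun x hx => (hs' x hx).2)
    have hgap : 0 ≤ k * ((k - a) * (k ^ s.card - s.prod)) :=
      mul_nonneg hk (mul_nonneg (sub_nonneg.2 ha) (sub_nonneg.2 hprod))
    simp only [Multiset.card_cons, Multiset.sum_cons, Multiset.prod_cons, Nat.cast_succ]
    linear_combination k * ih hs' + hgap

theorem maxMod_le_sum_range {P : ℂ[X]} {n : ℕ} (hn : P.natDegree < n) {r : ℝ} (hr : 0 ≤ r) :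
    maxMod P r ≤ ∑ i ∈ Finset.range n, ‖P.coeff i‖ * r ^ i := by
  refine Real.iSup_le (fun z => ?_) (by positivity)
  rw [eval_eq_sum_range' hn]
  refine (norm_sum_le _ _).trans_eq (Finset.sum_congr rfl fun i _ => ?_)
  rw [norm_mul, norm_pow, norm_eq_of_mem_sphere]

theorem norm_eval_le_maxMod (P : ℂ[X]) {r : ℝ} {z : ℂ} (hz : ‖z‖ = r) :
    ‖P.eval z‖ ≤ maxMod P r := by
  have hcompact : IsCompact (Set.range fun w : sphere (0 : ℂ) r => ‖P.eval (w : ℂ)‖) :=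
    isCompact_range (by fun_prop)
  exact le_ciSup hcompact.bddAbove ⟨z, mem_sphere_zero_iff_norm.2 hz⟩

theorem norm_add_mul_le_maxMod_linear (a b : ℂ) {r : ℝ} (hr : 0 ≤ r) :
    ‖a‖ * r + ‖b‖ ≤ maxMod (C a * X + C b) r := by
  -- At this point of the circle `a * z` and `b` have the same argument.
  let z : ℂ := r * Complex.exp ((b.arg - a.arg : ℝ) * Complex.I)
  have hz : ‖z‖ = r := by
    rw [norm_mul, Complex.norm_exp_ofReal_mul_I, Complex.norm_of_nonneg hr, mul_one]
  have haz : a * z = (‖a‖ * r : ℝ) * Complex.exp (b.arg * Complex.I) := by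
    conv_lhs => rw [← Complex.norm_mul_exp_arg_mul_I a]
    simp only [z, Complex.ofReal_sub, Complex.ofReal_mul, sub_mul, Complex.exp_sub]
    field_simp
  have heval : (C a * X + C b).eval z
      = (‖a‖ * r + ‖b‖ : ℝ) * Complex.exp (b.arg * Complex.I) := by
    simp only [eval_add, eval_mul, eval_C, eval_X, haz, Complex.ofReal_add, add_mul,
      Complex.norm_mul_exp_arg_mul_I]
  calc ‖a‖ * r + ‖b‖ = ‖(C a * X + C b).eval z‖ := by
        rw [heval, norm_mul, Complex.norm_exp_ofReal_mul_I, Complex.norm_of_nonneg (by positivity),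
          mul_one]
    _ ≤ maxMod (C a * X + C b) r := norm_eval_le_maxMod _ hz

theorem minMod_le_norm_eval (P : ℂ[X]) {r : ℝ} {z : ℂ} (hz : ‖z‖ = r) :
    minMod P r ≤ ‖P.eval z‖ :=
  ciInf_le (f := fun w : sphere (0 : ℂ) r => ‖P.eval (w : ℂ)‖)
    ⟨0, Set.forall_mem_range.2 fun _ => norm_nonneg _⟩ ⟨z, mem_sphere_zero_iff_norm.2 hz⟩

theorem eval_eq_pow_mul_eval_reverse_inv {K : Type*} [Field K] (P : K[X]) {w : K} (hw : w ≠ 0) :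
    P.eval w = w ^ P.natDegree * P.reverse.eval w⁻¹ := by
  let _ : Invertible w := invertibleOfNonzero hw
  simpa [eval₂_id, mul_comm] using (eval₂_reverse_mul_pow (RingHom.id K) w P).symm

section Vieta

variable {F : Type*} [NormedField F] {P : F[X]} {k : ℝ}

theorem norm_coeff_zero_eq_mul_prod_norm_roots (hP : P.Splits) :
    ‖P.coeff 0‖ = ‖P.leadingCoeff‖ * (P.roots.map fun w => ‖w‖).prod := by
  rw [hP.coeff_zero_eq_leadingCoeff_mul_prod_roots, norm_mul, norm_mul, norm_pow, norm_neg,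
    norm_one, one_pow, one_mul]
  exact congrArg _ (map_multiset_prod (normHom : F →*₀ ℝ) P.roots)

theorem norm_nextCoeff_le_mul_sum_norm_roots (hP : P.Splits) :
    ‖P.nextCoeff‖ ≤ ‖P.leadingCoeff‖ * (P.roots.map fun w => ‖w‖).sum := by
  rw [hP.nextCoeff_eq_neg_sum_roots_mul_leadingCoeff, norm_mul, norm_neg]
  gcongr
  exact norm_multiset_sum_le _

theorem norm_coeff_zero_le (hP : P.Splits) (hroots : ∀ w, P.IsRoot w → ‖w‖ ≤ k) :
    ‖P.coeff 0‖ ≤ k ^ P.natDegree * ‖P.leadingCoeff‖ := by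
  have hprod : (P.roots.map fun w => ‖w‖).prod ≤ k ^ P.natDegree := by
    rw [hP.natDegree_eq_card_roots]
    simpa using Multiset.prod_map_le_prod_map₀ (fun w : F => ‖w‖) (fun _ => k)
      (fun _ _ => norm_nonneg _) fun w hw => hroots w (isRoot_of_mem_roots hw)
  rw [norm_coeff_zero_eq_mul_prod_norm_roots hP, mul_comm]
  gcongr

theorem pow_mul_norm_nextCoeff_le (hP : P.Splits) (hk : 0 ≤ k)
    (hroots : ∀ w, P.IsRoot w → ‖w‖ ≤ k) :
    k ^ P.natDegree * ‖P.nextCoeff‖ ≤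
      k * ((P.natDegree - 1) * (k ^ P.natDegree * ‖P.leadingCoeff‖) + ‖P.coeff 0‖) := by
  let s : Multiset ℝ := P.roots.map fun w => ‖w‖
  have hcard : s.card = P.natDegree := by
    rw [Multiset.card_map, hP.natDegree_eq_card_roots]
  have hweierstrass := pow_card_mul_sum_le hk s fun x hx => by
    obtain ⟨w, hw, rfl⟩ := Multiset.mem_map.1 hx
    exact ⟨norm_nonneg w, hroots w (isRoot_of_mem_roots hw)⟩
  rw [hcard] at hweierstrass
  calc k ^ P.natDegree * ‖P.nextCoeff‖
      ≤ k ^ P.natDegree * (‖P.leadingCoeff‖ * s.sum) := by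
        gcongr
        exact norm_nextCoeff_le_mul_sum_norm_roots hP
    _ = ‖P.leadingCoeff‖ * (k ^ P.natDegree * s.sum) := by ring
    _ ≤ ‖P.leadingCoeff‖ * (k * ((P.natDegree - 1) * k ^ P.natDegree + s.prod)) := by gcongr
    _ = _ := by rw [norm_coeff_zero_eq_mul_prod_norm_roots hP]; ring

end Vieta

section RootsInDisc

variable {P : ℂ[X]} {k : ℝ}

theorem ne_zero_of_forall_isRoot_norm_le (hroots : ∀ w, P.IsRoot w → ‖w‖ ≤ k) : P ≠ 0 := by
  rintro rfl
  obtain ⟨w, hw⟩ := NormedField.exists_lt_norm ℂ k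
  exact hw.not_ge (hroots w eval_zero)

theorem eval_reverse_ne_zero (hroots : ∀ w, P.IsRoot w → ‖w‖ ≤ k) {v : ℂ}
    (hv : v ∈ ball (0 : ℂ) k⁻¹) : P.reverse.eval v ≠ 0 := by
  rcases eq_or_ne v 0 with rfl | hv0
  · rw [← coeff_zero_eq_eval_zero, coeff_zero_reverse, Ne, leadingCoeff_eq_zero]
    exact ne_zero_of_forall_isRoot_norm_le hroots
  · intro hzero
    have hroot : P.IsRoot v⁻¹ := by
      rw [IsRoot, eval_eq_pow_mul_eval_reverse_inv P (inv_ne_zero hv0), inv_inv, hzero, mul_zero]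
    rw [mem_ball_zero_iff] at hv
    exact (lt_inv_of_lt_inv₀ (norm_pos_iff.2 hv0) hv).not_ge (norm_inv v ▸ hroots _ hroot)

theorem minMod_div_pow_le_norm_eval_reverse (P : ℂ[X]) (hk : 0 < k) {v : ℂ} (hv : ‖v‖ = k⁻¹) :
    minMod P k / k ^ P.natDegree ≤ ‖P.reverse.eval v‖ := by
  have hv' : ‖v⁻¹‖ = k := by rw [norm_inv, hv, inv_inv]
  have hv0 : v⁻¹ ≠ 0 := norm_pos_iff.1 (hv' ▸ hk)
  have hmin := minMod_le_norm_eval P hv'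
  rw [eval_eq_pow_mul_eval_reverse_inv P hv0, inv_inv, norm_mul, norm_pow, hv'] at hmin
  rwa [div_le_iff₀' (by positivity)]

theorem minMod_le_pow_mul_norm_leadingCoeff (hk : 0 < k) (hroots : ∀ w, P.IsRoot w → ‖w‖ ≤ k) :
    minMod P k ≤ k ^ P.natDegree * ‖P.leadingCoeff‖ := by
  have hle : minMod P k / k ^ P.natDegree ≤ ‖P.reverse.eval 0‖ :=
    le_norm_of_forall_mem_frontier_le_norm (U := ball 0 k⁻¹) (f := fun v => P.reverse.eval v)
      isBounded_ball P.reverse.differentiable.diffContOnCl (fun _ => eval_reverse_ne_zero hroots)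
      (fun v hv => minMod_div_pow_le_norm_eval_reverse P hk (by
        simpa [frontier_ball (0 : ℂ) (inv_pos.2 hk).ne'] using hv))
      (subset_closure (mem_ball_self (inv_pos.2 hk)))
  rwa [← coeff_zero_eq_eval_zero, coeff_zero_reverse, div_le_iff₀' (by positivity)] at hle

theorem mul_norm_pow_lt_pow_mul_norm_eval (hk : 0 < k) (hroots : ∀ w, P.IsRoot w → ‖w‖ ≤ k)
    {s : ℝ} (hs : s ≤ minMod P k) (hs' : s < k ^ P.natDegree * ‖P.leadingCoeff‖) {w : ℂ}
    (hw : k < ‖w‖) : s * ‖w‖ ^ P.natDegree < k ^ P.natDegree * ‖P.eval w‖ := by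
  have hw0 : 0 < ‖w‖ := hk.trans hw
  have hlt : s / k ^ P.natDegree < ‖P.reverse.eval w⁻¹‖ :=
    lt_norm_of_forall_mem_frontier_le_norm (U := ball 0 k⁻¹) (f := fun v => P.reverse.eval v)
      (w := 0) isBounded_ball isOpen_ball (convex_ball 0 k⁻¹).isPreconnected
      P.reverse.differentiable.diffContOnCl (fun _ => eval_reverse_ne_zero hroots)
      (fun v hv => (div_le_div_of_nonneg_right hs (by positivity)).trans
        (minMod_div_pow_le_norm_eval_reverse P hk (by
          simpa [frontier_ball (0 : ℂ) (inv_pos.2 hk).ne'] using hv)))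
      (mem_ball_self (inv_pos.2 hk))
      (by rwa [← coeff_zero_eq_eval_zero, coeff_zero_reverse, div_lt_iff₀' (by positivity)])
      (by rw [mem_ball_zero_iff, norm_inv]; exact inv_strictAnti₀ hk hw)
  rw [div_lt_iff₀' (by positivity)] at hlt
  rw [eval_eq_pow_mul_eval_reverse_inv P (norm_pos_iff.1 hw0), norm_mul, norm_pow]
  calc s * ‖w‖ ^ P.natDegree
      < k ^ P.natDegree * ‖P.reverse.eval w⁻¹‖ * ‖w‖ ^ P.natDegree := by gcongr
    _ = _ := by ring

-- The polynomial is `P - λ z ^ n` with `λ` a multiple of the leading coefficient and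
-- `|λ| k ^ n = s`, so that `|λ z ^ n| < |P(z)|` outside the disc.
theorem exists_shrink_leadingCoeff (hk : 0 < k) (hroots : ∀ w, P.IsRoot w → ‖w‖ ≤ k)
    {s : ℝ} (hs : s ≤ minMod P k) (hs' : s < k ^ P.natDegree * ‖P.leadingCoeff‖) :
    ∃ Q : ℂ[X], Q.natDegree = P.natDegree ∧ (∀ i < P.natDegree, Q.coeff i = P.coeff i) ∧
      k ^ P.natDegree * ‖Q.leadingCoeff‖ ≤ k ^ P.natDegree * ‖P.leadingCoeff‖ - s ∧
      ∀ w, Q.IsRoot w → ‖w‖ ≤ k := by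
  rcases le_total s 0 with hs0 | hs0
  · exact ⟨P, rfl, fun _ _ => rfl, by linarith, hroots⟩
  have hlc : 0 < k ^ P.natDegree * ‖P.leadingCoeff‖ := hs0.trans_lt hs'
  obtain ⟨t, ht⟩ : ∃ t, t = s / (k ^ P.natDegree * ‖P.leadingCoeff‖) := ⟨_, rfl⟩
  have ht0 : 0 ≤ t := ht ▸ div_nonneg hs0 hlc.le
  have ht1 : t < 1 := ht ▸ (div_lt_one hlc).2 hs'
  have hts : t * (k ^ P.natDegree * ‖P.leadingCoeff‖) = s := by
    rw [ht, div_mul_cancel₀ _ hlc.ne']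
  let Q : ℂ[X] := P - C (t * P.leadingCoeff) * X ^ P.natDegree
  have hcoeff : Q.coeff P.natDegree = ((1 - t : ℝ) : ℂ) * P.leadingCoeff := by
    simp only [Q, coeff_sub, coeff_C_mul_X_pow, if_true, coeff_natDegree, Complex.ofReal_sub,
      Complex.ofReal_one, sub_mul, one_mul]
  have hnorm : ‖Q.coeff P.natDegree‖ = (1 - t) * ‖P.leadingCoeff‖ := by
    rw [hcoeff, norm_mul, Complex.norm_of_nonneg (sub_nonneg.2 ht1.le)]
  have hdeg : Q.natDegree = P.natDegree := by
    refine natDegree_eq_of_le_of_coeff_ne_zero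
      ?_ (norm_pos_iff.1 ?_)
    · exact (natDegree_sub_le_of_le le_rfl (natDegree_C_mul_X_pow_le _ _)).trans_eq (max_self _)
    · rw [hnorm]
      exact mul_pos (sub_pos.2 ht1) (pos_of_mul_pos_right hlc (by positivity))
  refine ⟨Q, hdeg, fun i hi => ?_, ?_, fun w hw => ?_⟩
  · simp only [Q, coeff_sub, coeff_C_mul_X_pow, hi.ne, if_false, sub_zero]
  · rw [leadingCoeff, hdeg, hnorm]
    linarith
  · by_contra! hkw
    have heval : P.eval w = t * P.leadingCoeff * w ^ P.natDegree := by
      simpa [Q, sub_eq_zero] using hw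
    refine (mul_norm_pow_lt_pow_mul_norm_eval hk hroots hs hs' hkw).ne ?_
    rw [heval, norm_mul, norm_mul, norm_pow, Complex.norm_of_nonneg ht0, ← hts]
    ring

theorem norm_coeff_zero_le_sub (hk : 0 < k) (hroots : ∀ w, P.IsRoot w → ‖w‖ ≤ k)
    (hdeg : P.natDegree ≠ 0) {s : ℝ} (hs : s ≤ minMod P k)
    (hs' : s < k ^ P.natDegree * ‖P.leadingCoeff‖) :
    ‖P.coeff 0‖ ≤ k ^ P.natDegree * ‖P.leadingCoeff‖ - s := by
  obtain ⟨Q, hQdeg, hcoeff, hlead, hQroots⟩ := exists_shrink_leadingCoeff hk hroots hs hs'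
  have hQ := norm_coeff_zero_le (IsAlgClosed.splits Q) hQroots
  rw [hQdeg, hcoeff 0 (Nat.pos_of_ne_zero hdeg)] at hQ
  exact hQ.trans hlead

theorem pow_mul_norm_nextCoeff_le_sub (hk : 0 < k) (hroots : ∀ w, P.IsRoot w → ‖w‖ ≤ k)
    (hdeg : P.natDegree ≠ 0) {s : ℝ} (hs : s ≤ minMod P k)
    (hs' : s < k ^ P.natDegree * ‖P.leadingCoeff‖) :
    k ^ P.natDegree * ‖P.nextCoeff‖ ≤
      k * ((P.natDegree - 1) * (k ^ P.natDegree * ‖P.leadingCoeff‖ - s) + ‖P.coeff 0‖) := by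
  obtain ⟨Q, hQdeg, hcoeff, hlead, hQroots⟩ := exists_shrink_leadingCoeff hk hroots hs hs'
  have hpos : 0 < P.natDegree := Nat.pos_of_ne_zero hdeg
  have hnext : Q.nextCoeff = P.nextCoeff := by
    rw [nextCoeff_of_natDegree_pos hpos, nextCoeff_of_natDegree_pos (hQdeg ▸ hpos), hQdeg,
      hcoeff _ (Nat.sub_lt hpos one_pos)]
  have hQ := pow_mul_norm_nextCoeff_le (IsAlgClosed.splits Q) hk.le hQroots
  rw [hQdeg, hcoeff 0 hpos, hnext] at hQ
  have hone : (0 : ℝ) ≤ P.natDegree - 1 := sub_nonneg.2 (Nat.one_le_cast.2 hpos)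
  exact hQ.trans (by gcongr)

end RootsInDisc

section Quadratic

variable {P : ℂ[X]} {a₀ a₁ a₂ : ℂ} {k s : ℝ}

theorem natDegree_of_eq_quadratic (hP : P = C a₀ + C a₁ * X + C a₂ * X ^ 2) (ha₂ : a₂ ≠ 0) :
    P.natDegree = 2 := by
  rw [hP]
  compute_degree!

theorem leadingCoeff_of_eq_quadratic (hP : P = C a₀ + C a₁ * X + C a₂ * X ^ 2) (ha₂ : a₂ ≠ 0) :
    P.leadingCoeff = a₂ := by
  rw [leadingCoeff, natDegree_of_eq_quadratic hP ha₂, hP]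
  simp

theorem minMod_quadratic_le (hP : P = C a₀ + C a₁ * X + C a₂ * X ^ 2) (ha₂ : a₂ ≠ 0)
    (hk : 0 < k) (hroots : ∀ w, P.IsRoot w → ‖w‖ ≤ k) : minMod P k ≤ k ^ 2 * ‖a₂‖ := by
  simpa only [natDegree_of_eq_quadratic hP ha₂, leadingCoeff_of_eq_quadratic hP ha₂] using
    minMod_le_pow_mul_norm_leadingCoeff hk hroots

theorem norm_quadratic_coeff_zero_le (hP : P = C a₀ + C a₁ * X + C a₂ * X ^ 2) (ha₂ : a₂ ≠ 0)
    (hk : 0 < k) (hroots : ∀ w, P.IsRoot w → ‖w‖ ≤ k) (hs : s ≤ minMod P k)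
    (hs' : s < k ^ 2 * ‖a₂‖) : ‖a₀‖ ≤ k ^ 2 * ‖a₂‖ - s := by
  have hdeg := natDegree_of_eq_quadratic hP ha₂
  have hlead := leadingCoeff_of_eq_quadratic hP ha₂
  have hcoeff : P.coeff 0 = a₀ := by simp [hP]
  simpa only [hdeg, hlead, hcoeff] using
    norm_coeff_zero_le_sub hk hroots (by lia) hs (by rwa [hdeg, hlead])

theorem mul_norm_quadratic_coeff_one_le (hP : P = C a₀ + C a₁ * X + C a₂ * X ^ 2)
    (ha₂ : a₂ ≠ 0) (hk : 0 < k) (hroots : ∀ w, P.IsRoot w → ‖w‖ ≤ k) (hs : s ≤ minMod P k)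
    (hs' : s < k ^ 2 * ‖a₂‖) : k * ‖a₁‖ ≤ k ^ 2 * ‖a₂‖ - s + ‖a₀‖ := by
  have hdeg := natDegree_of_eq_quadratic hP ha₂
  have hlead := leadingCoeff_of_eq_quadratic hP ha₂
  have hcoeff : P.coeff 0 = a₀ := by simp [hP]
  have hnext : P.nextCoeff = a₁ := by
    rw [nextCoeff_of_natDegree_pos (by lia), hdeg, hP]
    simp [coeff_C]
  have hbound := pow_mul_norm_nextCoeff_le_sub hk hroots (by lia) hs (by rwa [hdeg, hlead])
  simp only [hdeg, hlead, hcoeff, hnext] at hbound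
  refine le_of_mul_le_mul_left ?_ hk
  linear_combination hbound

theorem maxMod_quadratic_le (hP : P = C a₀ + C a₁ * X + C a₂ * X ^ 2) :
    maxMod P 1 ≤ ‖a₂‖ + ‖a₁‖ + ‖a₀‖ := by
  have hdeg : P.natDegree < 3 := by
    rw [hP, Nat.lt_succ_iff]
    compute_degree
  refine (maxMod_le_sum_range hdeg zero_le_one).trans_eq ?_
  simp only [hP, Finset.sum_range_succ, Finset.sum_range_zero, coeff_add, coeff_C, coeff_C_mul,
    coeff_X, coeff_X_pow]
  norm_num
  ring

theorem two_mul_norm_add_le_maxMod_derivative (hP : P = C a₀ + C a₁ * X + C a₂ * X ^ 2) :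
    2 * ‖a₂‖ + ‖a₁‖ ≤ maxMod (derivative P) 1 := by
  have hderiv : derivative P = C (2 * a₂) * X + C a₁ := by
    simp only [hP, derivative_add, derivative_C, derivative_C_mul, derivative_X, derivative_X_sq,
      C_mul]
    ring
  simpa only [hderiv, norm_mul, Complex.norm_two, mul_one] using
    norm_add_mul_le_maxMod_linear (2 * a₂) a₁ zero_le_one

end Quadratic

section RealInequality

variable {k c a A s M : ℝ}

-- Here `M`, `A` stand for `max |P|`, `|a₁|`: the bound depends on `M` only through `M - A`, which
-- is at most `|a₂| + |a₀|`.
theorem quadratic_bound_eq (hk : k ≠ 0) (D : ℝ) :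
    2 / (1 + k ^ 2) * (M + s) + (1 - 1 / k) * A +
        1 / (k ^ 2 * (1 + k ^ 2)) *
          (D * (k ^ 2 * M - s) + k * A * ((k - 1) ^ 2 / 2) * (2 + D)) =
      A + D * A / (2 * k) + (2 + D) / (1 + k ^ 2) * (M - A) +
        s * (2 * k ^ 2 - D) / (k ^ 2 * (1 + k ^ 2)) := by
  field_simp
  ring

theorem sub_div_add_mul_div_le {K : ℝ} (hk : 0 < k) (hK : 0 < K + a) (haK : a ≤ K)
    (hA : k * A ≤ K + a) :
    (K - a) / (K + a) * A / (2 * k) ≤ (K - a) / (2 * k ^ 2) := by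
  have : 0 ≤ K - a := sub_nonneg.2 haK
  calc (K - a) / (K + a) * A / (2 * k)
      = (K - a) / (2 * k ^ 2) * (k * A / (K + a)) := by field_simp
    _ ≤ (K - a) / (2 * k ^ 2) * 1 := by gcongr; exact (div_le_one hK).2 hA
    _ = (K - a) / (2 * k ^ 2) := mul_one _

theorem sub_div_add_bound_le_two_mul {K : ℝ} (hk : 1 ≤ k) (ha : 0 ≤ a) (hK : 0 < K) (haK : a ≤ K)
    (hKc : K = k ^ 2 * c - s) :
    (K - a) / (2 * k ^ 2) + (2 + (K - a) / (K + a)) / (1 + k ^ 2) * (c + a) +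
      s * (2 * k ^ 2 - (K - a) / (K + a)) / (k ^ 2 * (1 + k ^ 2)) ≤ 2 * c := by
  have hKa : K + a ≠ 0 := by positivity
  have hk0 : k ≠ 0 := by positivity
  have hgap : 0 ≤ (k ^ 2 - 1) * (3 * K + a) * (K - a) / (2 * k ^ 2 * (1 + k ^ 2) * (K + a)) := by
    have : 0 ≤ k ^ 2 - 1 := sub_nonneg.2 (one_le_pow₀ hk)
    have : 0 ≤ K - a := sub_nonneg.2 haK
    positivity
  rw [← sub_nonneg]
  convert hgap using 1
  obtain rfl : s = k ^ 2 * c - K := by linarith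
  field_simp
  ring

end RealInequality

theorem stmt_3_general (a₀ a₁ a₂ : ℂ) (ha₂ : a₂ ≠ 0) (P : Polynomial ℂ)
    (hP : P = C a₀ + C a₁ * X + C a₂ * X ^ 2)
    (k : ℝ) (hk : 1 ≤ k) (hroots : ∀ w : ℂ, P.IsRoot w → ‖w‖ ≤ k)
    (s : ℝ) (hs : s ≤ minMod P k) (hs' : s < k ^ 2 * ‖a₂‖) :
    maxMod (Polynomial.derivative P) 1 ≥
      (2 / (1 + k ^ 2)) * (maxMod P 1 + s) +
        (1 - 1 / k) * ‖a₁‖ +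
        (1 / (k ^ 2 * (1 + k ^ 2))) *
          (((k ^ 2 * ‖a₂‖ - s - ‖a₀‖) / (k ^ 2 * ‖a₂‖ - s + ‖a₀‖)) *
              (k ^ 2 * maxMod P 1 - s) +
            k * ‖a₁‖ * ((k - 1) ^ 2 / 2) *
              (2 + (k ^ 2 * ‖a₂‖ - s - ‖a₀‖) / (k ^ 2 * ‖a₂‖ - s + ‖a₀‖))) := by
  have hk0 : 0 < k := one_pos.trans_le hk
  have h₀ := norm_quadratic_coeff_zero_le hP ha₂ hk0 hroots hs hs'
  have h₁ := mul_norm_quadratic_coeff_one_le hP ha₂ hk0 hroots hs hs'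
  have hK : 0 < k ^ 2 * ‖a₂‖ - s := sub_pos.2 hs'
  rw [quadratic_bound_eq hk0.ne']
  set K := k ^ 2 * ‖a₂‖ - s with hKdef
  have hmax : (2 + (K - ‖a₀‖) / (K + ‖a₀‖)) / (1 + k ^ 2) * (maxMod P 1 - ‖a₁‖) ≤
      (2 + (K - ‖a₀‖) / (K + ‖a₀‖)) / (1 + k ^ 2) * (‖a₂‖ + ‖a₀‖) := by
    have : 0 ≤ (K - ‖a₀‖) / (K + ‖a₀‖) := div_nonneg (sub_nonneg.2 h₀) (by positivity)
    gcongr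
    linarith [maxMod_quadratic_le hP]
  linarith [two_mul_norm_add_le_maxMod_derivative hP,
    sub_div_add_mul_div_le hk0 (by positivity) h₀ h₁,
    sub_div_add_bound_le_two_mul hk (norm_nonneg a₀) hK h₀ hKdef]

theorem stmt_3 (a₀ a₁ a₂ : ℂ) (ha₂ : a₂ ≠ 0) (P : Polynomial ℂ)
    (hP : P = C a₀ + C a₁ * X + C a₂ * X ^ 2)
    (k : ℝ) (hk : 1 ≤ k) (hroots : ∀ w : ℂ, P.IsRoot w → ‖w‖ ≤ k)
    (m : ℝ) (hm : m = minMod P k) (l : ℝ) (hl0 : 0 ≤ l) (hl1 : l < 1) :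
    maxMod (Polynomial.derivative P) 1 ≥
      (2 / (1 + k ^ 2)) * (maxMod P 1 + l * m) +
        (1 - 1 / k) * ‖a₁‖ +
        (1 / (k ^ 2 * (1 + k ^ 2))) *
          (((k ^ 2 * ‖a₂‖ - l * m - ‖a₀‖) /
                (k ^ 2 * ‖a₂‖ - l * m + ‖a₀‖)) *
              (k ^ 2 * maxMod P 1 - l * m) +
            k * ‖a₁‖ * ((k - 1) ^ 2 / 2) *
              (2 + (k ^ 2 * ‖a₂‖ - l * m - ‖a₀‖) /
                  (k ^ 2 * ‖a₂‖ - l * m + ‖a₀‖))) := by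
  have hle := minMod_quadratic_le hP ha₂ (one_pos.trans_le hk) hroots
  have hpos : 0 < k ^ 2 * ‖a₂‖ := by positivity
  subst hm
  exact stmt_3_general a₀ a₁ a₂ ha₂ P hP k hk hroots _
    (mul_le_of_le_one_left (Real.iInf_nonneg fun _ => norm_nonneg _) hl1.le)
    ((mul_le_mul_of_nonneg_left hle hl0).trans_lt (mul_lt_of_lt_one_left hpos hl1))
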